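/- Fix positive reals p₋₁, p₀, p₁, let τ = √(p₋₁/p₁), P(τ) = p₀ + 2√(p₋₁p₁) and P″(τ) = 2p₋₁/τ³. Let b_n denote the total weight of Motzkin bridges of length n and b_{n,k} the total weight of bridges of length n with exactly k sign changes, and define X_n by P[X_n = k] = b_{n,k}/b_n (note b_n ≥ p₀ⁿ > 0). Then X_n/√n converges in distribution to the Rayleigh law R(σ) with σ = (τ/2)·√(P″(τ)/P(τ)): for every real x ≥ 0, lim_{n→∞} (Σ_{k ≤ x√n} b_{n,k})/b_n = 1 − exp(−x²/(2σ²)). -/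

import Mathlib

open scoped BigOperators Classical

/-- Value of a step encoded by `Fin 3`: `0 ↦ -1`, `1 ↦ 0`, `2 ↦ +1`. -/
def stepVal (s : Fin 3) : ℤ := (s : ℤ) - 1

/-- Weight of a single step: `p₋₁` for `-1`, `p₀` for `0`, `p₁` for `+1`. -/
def stepWeight (pm p0 p1 : ℝ) (s : Fin 3) : ℝ :=
  if s = 0 then pm else if s = 1 then p0 else p1

/-- Weight of a Motzkin walk (product of its step weights). -/
def walkWeight (pm p0 p1 : ℝ) {n : ℕ} (w : Fin n → Fin 3) : ℝ :=
  ∏ i, stepWeight pm p0 p1 (w i)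

/-- Partial sum `ω_j` of the walk `w`. -/
def psum {n : ℕ} (w : Fin n → Fin 3) (j : ℕ) : ℤ :=
  ∑ i ∈ Finset.univ.filter (fun i : Fin n => (i : ℕ) < j), stepVal (w i)

/-- Total weight of Motzkin bridges of length `n`. -/
noncomputable def bridgeW (pm p0 p1 : ℝ) (n : ℕ) : ℝ :=
  ∑ w ∈ Finset.univ.filter (fun w : Fin n → Fin 3 => psum w n = 0),
    walkWeight pm p0 p1 w

/-- Number of returns to zero of a walk of length `n`. -/
def retZero {n : ℕ} (w : Fin n → Fin 3) : ℕ :=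
  ((Finset.Icc 1 n).filter (fun j => psum w j = 0)).card

/-- Total weight of walks of length `n` with exactly `k` returns to zero. -/
noncomputable def walkRetW (pm p0 p1 : ℝ) (n k : ℕ) : ℝ :=
  ∑ w ∈ Finset.univ.filter (fun w : Fin n → Fin 3 => retZero w = k),
    walkWeight pm p0 p1 w

/-- Number of sign changes of a walk of length `n`. -/
def signChanges {n : ℕ} (w : Fin n → Fin 3) : ℕ :=
  (((Finset.range (n+1)) ×ˢ (Finset.range (n+1))).filter
    (fun p => p.1 < p.2 ∧ psum w p.1 * psum w p.2 < 0 ∧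
      ∀ l ∈ Finset.Ioo p.1 p.2, psum w l = 0)).card

/-- Total weight of bridges of length `n` with exactly `k` sign changes. -/
noncomputable def bridgeSignW (pm p0 p1 : ℝ) (n k : ℕ) : ℝ :=
  ∑ w ∈ Finset.univ.filter
      (fun w : Fin n → Fin 3 => psum w n = 0 ∧ signChanges w = k),
    walkWeight pm p0 p1 w

/-- Total weight of positive excursions of length `n`. -/
noncomputable def posExcW (pm p0 p1 : ℝ) (n : ℕ) : ℝ :=
  ∑ w ∈ Finset.univ.filter
      (fun w : Fin n → Fin 3 => psum w n = 0 ∧ ∀ j ∈ Finset.range (n+1), 0 ≤ psum w j),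
    walkWeight pm p0 p1 w

/-- Total weight of negative excursions of length `n`. -/
noncomputable def negExcW (pm p0 p1 : ℝ) (n : ℕ) : ℝ :=
  ∑ w ∈ Finset.univ.filter
      (fun w : Fin n → Fin 3 => psum w n = 0 ∧ ∀ j ∈ Finset.range (n+1), psum w j ≤ 0),
    walkWeight pm p0 p1 w

/-- A positive bridge: a bridge whose last nonzero partial sum is positive. -/
def IsPosBridge {n : ℕ} (w : Fin n → Fin 3) : Prop :=
  psum w n = 0 ∧ ∃ j ∈ Finset.range (n+1),
    0 < psum w j ∧ ∀ l ∈ Finset.Ioc j n, psum w l = 0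

/-- A negative bridge: a bridge whose last nonzero partial sum is negative. -/
def IsNegBridge {n : ℕ} (w : Fin n → Fin 3) : Prop :=
  psum w n = 0 ∧ ∃ j ∈ Finset.range (n+1),
    psum w j < 0 ∧ ∀ l ∈ Finset.Ioc j n, psum w l = 0

instance {n : ℕ} (w : Fin n → Fin 3) : Decidable (IsPosBridge w) := by
  unfold IsPosBridge; infer_instance

instance {n : ℕ} (w : Fin n → Fin 3) : Decidable (IsNegBridge w) := by
  unfold IsNegBridge; infer_instance

/-- Total weight of positive bridges of length `n` with `k` sign changes. -/
noncomputable def posBridgeSignW (pm p0 p1 : ℝ) (n k : ℕ) : ℝ :=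
  ∑ w ∈ Finset.univ.filter
      (fun w : Fin n → Fin 3 => IsPosBridge w ∧ signChanges w = k),
    walkWeight pm p0 p1 w

/-- Total weight of negative bridges of length `n` with `k` sign changes. -/
noncomputable def negBridgeSignW (pm p0 p1 : ℝ) (n k : ℕ) : ℝ :=
  ∑ w ∈ Finset.univ.filter
      (fun w : Fin n → Fin 3 => IsNegBridge w ∧ signChanges w = k),
    walkWeight pm p0 p1 w

/-- Total weight of walks of length `n` with `k` sign changes. -/
noncomputable def walkSignW (pm p0 p1 : ℝ) (n k : ℕ) : ℝ :=
  ∑ w ∈ Finset.univ.filter (fun w : Fin n → Fin 3 => signChanges w = k),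
    walkWeight pm p0 p1 w

/-- Height of a walk of length `n` (as a natural number; it is `max_j ω_j ≥ 0`). -/
def height {n : ℕ} (w : Fin n → Fin 3) : ℕ :=
  (Finset.range (n+1)).sup (fun j => (psum w j).toNat)

/-- Total weight of walks of length `n` of height exactly `h`. -/
noncomputable def heightW (pm p0 p1 : ℝ) (n h : ℕ) : ℝ :=
  ∑ w ∈ Finset.univ.filter (fun w : Fin n → Fin 3 => height w = h),
    walkWeight pm p0 p1 w

/-!
Replacing the weights `p₋₁`, `p₁` by `p₋₁ / τ`, `p₁ τ` does not change the weight of a bridge and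
makes both equal to `a = √(p₋₁ p₁)`. Count sign changes as if the walk had been positive before
time `0`; this changes the count by at most one. Unfolding a symmetric walk at its sign changes
(reflection principle) turns the bridges with at least `J` sign changes into walks from `0` to
`2 J`. By the local limit theorem, the weight of the walks from `0` to about `2 x √n`, divided by
the weight of the bridges, tends to `exp (-(2 x) ^ 2 / (2 q))`, where `q = 2 a / (p₀ + 2 a)` is the
variance of a step; since `q = 4 σ ^ 2`, this is the tail of the Rayleigh law.
-/

section SignChanges

/-- The last nonzero value among `ω 1, …, ω n`, and the default `x` if they all vanish. The value
`ω 0` is ignored: it is always `0` for a walk, and `x` stands for the past of `ω`. -/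
def lastNonzero (x : ℤ) (ω : ℕ → ℤ) : ℕ → ℤ
  | 0 => x
  | n + 1 => if ω (n + 1) = 0 then lastNonzero x ω n else ω (n + 1)

/-- The number of sign changes of `ω` up to index `n`, if the last nonzero value before index `1`
is taken to be `x`. -/
def changesFrom (x : ℤ) (ω : ℕ → ℤ) (n : ℕ) : ℕ :=
  ((Finset.range n).filter fun j => lastNonzero x ω j * ω (j + 1) < 0).card

variable {ω ω' : ℕ → ℤ} {x : ℤ} {n : ℕ}

lemma changesFrom_succ (x : ℤ) (ω : ℕ → ℤ) (n : ℕ) :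
    changesFrom x ω (n + 1) =
      changesFrom x ω n + if lastNonzero x ω n * ω (n + 1) < 0 then 1 else 0 := by
  simp only [changesFrom, Finset.card_filter, Finset.sum_range_succ]

lemma lastNonzero_congr (h : ∀ i ≤ n, ω i = ω' i) : lastNonzero x ω n = lastNonzero x ω' n := by
  induction n with
  | zero => rfl
  | succ n ih => simp only [lastNonzero, h (n + 1) le_rfl, ih fun i hi => h i (by lia)]

lemma changesFrom_congr (h : ∀ i ≤ n, ω i = ω' i) : changesFrom x ω n = changesFrom x ω' n := by
  induction n with
  | zero => rfl
  | succ n ih =>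
    simp only [changesFrom_succ, h (n + 1) le_rfl, ih fun i hi => h i (by lia),
      lastNonzero_congr fun i (hi : i ≤ n) => h i (by lia)]

lemma lastNonzero_ne_zero (hx : x ≠ 0) : lastNonzero x ω n ≠ 0 := by
  induction n with
  | zero => exact hx
  | succ n ih => unfold lastNonzero; split_ifs <;> assumption

lemma lastNonzero_of_ne_zero (h0 : ω 0 = 0) (h : ω n ≠ 0) : lastNonzero x ω n = ω n := by
  cases n with
  | zero => exact absurd h0 h
  | succ n => simp only [lastNonzero, if_neg h]

lemma lastNonzero_eq_ite (x : ℤ) (ω : ℕ → ℤ) (n : ℕ) :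
    lastNonzero x ω n = if lastNonzero 0 ω n = 0 then x else lastNonzero 0 ω n := by
  induction n with
  | zero => rfl
  | succ n ih => unfold lastNonzero; split_ifs <;> simp_all

lemma changesFrom_zero_le (x : ℤ) (ω : ℕ → ℤ) (n : ℕ) : changesFrom 0 ω n ≤ changesFrom x ω n := by
  refine Finset.card_le_card (Finset.monotone_filter_right _ fun j _ hj => ?_)
  have hne : lastNonzero 0 ω j ≠ 0 := left_ne_zero_of_mul hj.ne
  rwa [lastNonzero_eq_ite, if_neg hne]

-- The default `x` is consulted only until the first nonzero value of `ω` is met.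
lemma changesFrom_le_add_ite (x : ℤ) (ω : ℕ → ℤ) (n : ℕ) :
    changesFrom x ω n ≤ changesFrom 0 ω n + if lastNonzero 0 ω n = 0 then 0 else 1 := by
  induction n with
  | zero => simp [changesFrom]
  | succ n ih =>
    rw [changesFrom_succ, changesFrom_succ, lastNonzero_eq_ite x, lastNonzero]
    grind

lemma changesFrom_le_succ (x : ℤ) (ω : ℕ → ℤ) (n : ℕ) :
    changesFrom x ω n ≤ changesFrom 0 ω n + 1 :=
  (changesFrom_le_add_ite x ω n).trans (by split_ifs <;> lia)

lemma card_filter_mul_neg_eq_ite (ω : ℕ → ℤ) (y : ℤ) (n : ℕ) :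
    ((Finset.range (n + 1)).filter fun i =>
        ω i * y < 0 ∧ ∀ l ∈ Finset.Ioo i (n + 1), ω l = 0).card =
      if lastNonzero (ω 0) ω n * y < 0 then 1 else 0 := by
  induction n with
  | zero =>
    simp only [zero_add, Finset.range_one, Finset.filter_singleton, lastNonzero, Finset.mem_Ioo,
      apply_ite Finset.card, Finset.card_singleton, Finset.card_empty]
    grind
  | succ n ih =>
    by_cases hzero : ω (n + 1) = 0
    · rw [lastNonzero, if_pos hzero, ← ih]
      congr 1
      ext i
      simp only [Finset.mem_filter, Finset.mem_range, Finset.mem_Ioo]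
      grind
    · rw [lastNonzero, if_neg hzero, ← Finset.card_singleton (n + 1), ← Finset.card_empty (α := ℕ),
        ← apply_ite Finset.card]
      congr 1
      ext i
      simp only [Finset.mem_filter, Finset.mem_range, Finset.mem_Ioo]
      grind

end SignChanges

section Walks

variable {n : ℕ}

lemma psum_zero (w : Fin n → Fin 3) : psum w 0 = 0 := by
  simp [psum]

lemma psum_length (w : Fin n → Fin 3) : psum w n = ∑ i, stepVal (w i) := by
  simp [psum]

lemma psum_snoc_of_le (w : Fin n → Fin 3) (s : Fin 3) {j : ℕ} (hj : j ≤ n) :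
    psum (Fin.snoc w s : Fin (n + 1) → Fin 3) j = psum w j := by
  simp [psum, Finset.sum_filter, Fin.sum_univ_castSucc, hj.not_gt]

lemma psum_snoc_length (w : Fin n → Fin 3) (s : Fin 3) :
    psum (Fin.snoc w s : Fin (n + 1) → Fin 3) (n + 1) = psum w n + stepVal s := by
  simp [psum_length, Fin.sum_univ_castSucc]

lemma signChanges_eq_changesFrom (w : Fin n → Fin 3) :
    signChanges w = changesFrom 0 (psum w) n := by
  unfold signChanges changesFrom
  rw [Finset.card_filter, Finset.sum_product_right, Finset.sum_range_succ', Finset.card_filter]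
  simp only [not_lt_zero, false_and, if_false, Finset.sum_const_zero, add_zero]
  refine Finset.sum_congr rfl fun j hj => ?_
  rw [Finset.mem_range] at hj
  have hcard := card_filter_mul_neg_eq_ite (psum w) (psum w (j + 1)) j
  rw [psum_zero] at hcard
  rw [← hcard, ← Finset.card_filter]
  congr 1
  ext i
  simp only [Finset.mem_filter, Finset.mem_range]
  grind

end Walks

section Weights

variable {n : ℕ} {pm p0 p1 r : ℝ}

lemma sum_stepWeight_mul (pm p0 p1 : ℝ) (F : ℤ → ℝ) :
    ∑ s, stepWeight pm p0 p1 s * F (stepVal s) = pm * F (-1) + p0 * F 0 + p1 * F 1 := by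
  simp [Fin.sum_univ_three, stepWeight, stepVal]

lemma walkWeight_nonneg (hpm : 0 ≤ pm) (hp0 : 0 ≤ p0) (hp1 : 0 ≤ p1) (w : Fin n → Fin 3) :
    0 ≤ walkWeight pm p0 p1 w := by
  refine Finset.prod_nonneg fun i _ => ?_
  unfold stepWeight
  split_ifs <;> assumption

lemma sum_walkWeight_mul_succ (pm p0 p1 : ℝ) (F : (Fin (n + 1) → Fin 3) → ℝ) :
    ∑ w, walkWeight pm p0 p1 w * F w =
      ∑ w, walkWeight pm p0 p1 w * ∑ s, stepWeight pm p0 p1 s * F (Fin.snoc w s) := by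
  rw [← (Fin.snocEquiv fun _ => Fin 3).sum_comp, Fintype.sum_prod_type_right]
  simp [walkWeight, Fin.prod_univ_castSucc, Fin.snocEquiv, mul_assoc, Finset.mul_sum]

lemma walkWeight_tilt (pm p0 p1 : ℝ) (hr : r ≠ 0) (w : Fin n → Fin 3) :
    walkWeight (pm / r) p0 (p1 * r) w = walkWeight pm p0 p1 w * r ^ psum w n := by
  have hstep (s : Fin 3) :
      stepWeight (pm / r) p0 (p1 * r) s = stepWeight pm p0 p1 s * r ^ stepVal s := by
    fin_cases s <;> simp [stepWeight, stepVal, div_eq_mul_inv]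
  have hpow (S : Finset (Fin n)) :
      ∏ i ∈ S, r ^ stepVal (w i) = r ^ ∑ i ∈ S, stepVal (w i) := by
    induction S using Finset.induction_on with
    | empty => simp
    | insert i S hi ih => rw [Finset.prod_insert hi, Finset.sum_insert hi, ih, zpow_add₀ hr]
  simp only [walkWeight, hstep, Finset.prod_mul_distrib, hpow, psum_length]

lemma bridgeW_tilt (pm p0 p1 : ℝ) (hr : r ≠ 0) (n : ℕ) :
    bridgeW (pm / r) p0 (p1 * r) n = bridgeW pm p0 p1 n := by
  refine Finset.sum_congr rfl fun w hw => ?_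
  simp [walkWeight_tilt pm p0 p1 hr, (Finset.mem_filter.1 hw).2]

lemma bridgeSignW_tilt (pm p0 p1 : ℝ) (hr : r ≠ 0) (n k : ℕ) :
    bridgeSignW (pm / r) p0 (p1 * r) n k = bridgeSignW pm p0 p1 n k := by
  refine Finset.sum_congr rfl fun w hw => ?_
  simp [walkWeight_tilt pm p0 p1 hr, (Finset.mem_filter.1 hw).2.1]

lemma bridgeW_pos (hpm : 0 ≤ pm) (hp0 : 0 < p0) (hp1 : 0 ≤ p1) (n : ℕ) :
    0 < bridgeW pm p0 p1 n := by
  have hflat : walkWeight pm p0 p1 (fun _ : Fin n => 1) = p0 ^ n := by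
    simp [walkWeight, stepWeight]
  have hmem : (fun _ : Fin n => (1 : Fin 3)) ∈ Finset.univ.filter fun w => psum w n = 0 := by
    simp [psum, stepVal]
  calc 0 < p0 ^ n := pow_pos hp0 n
    _ ≤ bridgeW pm p0 p1 n := hflat ▸ Finset.single_le_sum
        (fun w _ => walkWeight_nonneg hpm hp0.le hp1 w) hmem

/-- Total weight of walks of length `n` that end at `y`. -/
noncomputable def endpointW (pm p0 p1 : ℝ) (n : ℕ) (y : ℤ) : ℝ :=
  ∑ w ∈ Finset.univ.filter (fun w : Fin n → Fin 3 => psum w n = y), walkWeight pm p0 p1 w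

lemma endpointW_eq_sum_ite (pm p0 p1 : ℝ) (n : ℕ) (y : ℤ) :
    endpointW pm p0 p1 n y =
      ∑ w : Fin n → Fin 3, walkWeight pm p0 p1 w * if psum w n = y then 1 else 0 := by
  simp [endpointW, Finset.sum_filter]

lemma endpointW_zero (pm p0 p1 : ℝ) (y : ℤ) :
    endpointW pm p0 p1 0 y = if y = 0 then 1 else 0 := by
  simp [endpointW_eq_sum_ite, walkWeight, psum_zero, eq_comm]

lemma endpointW_succ (pm p0 p1 : ℝ) (n : ℕ) (y : ℤ) :
    endpointW pm p0 p1 (n + 1) y = pm * endpointW pm p0 p1 n (y + 1) +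
      p0 * endpointW pm p0 p1 n y + p1 * endpointW pm p0 p1 n (y - 1) := by
  simp only [endpointW_eq_sum_ite, Finset.mul_sum, ← Finset.sum_add_distrib]
  rw [sum_walkWeight_mul_succ]
  refine Finset.sum_congr rfl fun w _ => ?_
  simp only [psum_snoc_length]
  rw [sum_stepWeight_mul pm p0 p1 fun v => if psum w n + v = y then 1 else 0]
  simp only [← sub_eq_add_neg, add_zero, sub_eq_iff_eq_add, ← eq_sub_iff_add_eq]
  ring

lemma endpointW_neg (pm p0 p1 : ℝ) (n : ℕ) (y : ℤ) :
    endpointW pm p0 p1 n (-y) = endpointW p1 p0 pm n y := by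
  induction n generalizing y with
  | zero => simp [endpointW_zero]
  | succ n ih =>
    rw [endpointW_succ, endpointW_succ, ← ih, ← ih, ← ih, neg_add', neg_sub,
      sub_eq_neg_add 1 y]
    ring

end Weights

section Reflection

variable {n : ℕ} {a p0 : ℝ}

/-- The height of `ω` at time `n` after unfolding its sign changes, of which `J` are required: each
missing sign change raises `|ω n|` by `2`. The walk counts as positive before it leaves `0`, so that
`foldedHeight J ω n = 0` iff `ω n = 0` and at least `J` sign changes have occurred. -/
def foldedHeight (J : ℕ) (ω : ℕ → ℤ) (n : ℕ) : ℤ :=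
  |ω n| + 2 * ((J - changesFrom 1 ω n : ℕ) : ℤ)

lemma foldedHeight_eq_zero_iff {J : ℕ} {ω : ℕ → ℤ} :
    foldedHeight J ω n = 0 ↔ ω n = 0 ∧ J ≤ changesFrom 1 ω n := by
  unfold foldedHeight
  grind

-- A step that changes sign starts at `y = 0`. It raises `|y|` by `1` and uses up one of the `k`
-- missing sign changes; if none is missing, `φ` does not see the difference.
lemma apply_fold_step {φ : ℤ → ℝ} (hφ : ∀ y, φ (-y) = φ y) {x y v : ℤ} (hx : x ≠ 0)
    (hxy : y ≠ 0 → x = y) (hv : |v| ≤ 1) (k : ℕ) :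
    φ (|y + v| + 2 * ((k - if x * (y + v) < 0 then 1 else 0 : ℕ) : ℤ)) =
      φ (|y| + 2 * k + x.sign * v) := by
  by_cases hcross : x * (y + v) < 0
  · have hy : y = 0 := by
      by_contra hy
      rw [hxy hy] at hcross
      rcases mul_neg_iff.1 hcross with h | h <;> grind
    subst hy
    rw [zero_add] at hcross ⊢
    have hv' : |v| = 1 ∧ x.sign * v = -1 := by
      rcases hx.lt_or_gt with hx | hx
      · have : 0 < v := by nlinarith
        grind [Int.sign_eq_neg_one_of_neg hx]
      · have : v < 0 := by nlinarith
        grind [Int.sign_eq_one_of_pos hx]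
    rw [if_pos hcross, abs_zero, zero_add, hv'.1, hv'.2]
    cases k with
    | zero => simpa using (hφ 1).symm
    | succ k => congr 1; push_cast; ring
  · have habs : |y + v| = |y| + x.sign * v := by
      rcases hx.lt_or_gt with hx | hx
      · have : y + v ≤ 0 := by nlinarith
        grind [Int.sign_eq_neg_one_of_neg hx]
      · have : 0 ≤ y + v := by nlinarith
        grind [Int.sign_eq_one_of_pos hx]
    rw [if_neg hcross, habs, Nat.sub_zero, add_right_comm]

lemma abs_stepVal_le_one (s : Fin 3) : |stepVal s| ≤ 1 := by
  fin_cases s <;> simp [stepVal]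

lemma sum_stepWeight_mul_comp_neg (a p0 : ℝ) (F : ℤ → ℝ) :
    ∑ s, stepWeight a p0 a s * F (-stepVal s) = ∑ s, stepWeight a p0 a s * F (stepVal s) := by
  rw [sum_stepWeight_mul a p0 a fun v => F (-v), sum_stepWeight_mul]
  simp only [neg_neg, neg_zero]
  ring

lemma sum_stepWeight_mul_fold {φ : ℤ → ℝ} (hφ : ∀ y, φ (-y) = φ y) (a p0 : ℝ) {x y : ℤ}
    (hx : x ≠ 0) (hxy : y ≠ 0 → x = y) (k : ℕ) :
    ∑ s, stepWeight a p0 a s *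
        φ (|y + stepVal s| + 2 * ((k - if x * (y + stepVal s) < 0 then 1 else 0 : ℕ) : ℤ)) =
      ∑ s, stepWeight a p0 a s * φ (|y| + 2 * k + stepVal s) := by
  simp only [fun s => apply_fold_step hφ hx hxy (abs_stepVal_le_one s) k]
  rcases hx.lt_or_gt with hneg | hpos
  · simpa only [Int.sign_eq_neg_one_of_neg hneg, neg_one_mul] using
      sum_stepWeight_mul_comp_neg a p0 fun v => φ (|y| + 2 * k + v)
  · simp only [Int.sign_eq_one_of_pos hpos, one_mul]

lemma sum_stepWeight_mul_foldedHeight_snoc {φ : ℤ → ℝ} (hφ : ∀ y, φ (-y) = φ y) (a p0 : ℝ) (J : ℕ)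
    (w : Fin n → Fin 3) :
    ∑ s, stepWeight a p0 a s *
        φ (foldedHeight J (psum (Fin.snoc w s : Fin (n + 1) → Fin 3)) (n + 1)) =
      ∑ s, stepWeight a p0 a s * φ (foldedHeight J (psum w) n + stepVal s) := by
  have hprefix (s : Fin 3) : ∀ i ≤ n, psum (Fin.snoc w s : Fin (n + 1) → Fin 3) i = psum w i :=
    fun i hi => psum_snoc_of_le w s hi
  simp only [foldedHeight, changesFrom_succ, psum_snoc_length, changesFrom_congr (hprefix _),
    lastNonzero_congr (hprefix _), Nat.sub_add_eq]
  exact sum_stepWeight_mul_fold hφ a p0 (lastNonzero_ne_zero one_ne_zero)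
    (lastNonzero_of_ne_zero (psum_zero w)) _

lemma sum_walkWeight_mul_endpointW_foldedHeight (a p0 : ℝ) (J n m : ℕ) :
    ∑ w : Fin n → Fin 3, walkWeight a p0 a w * endpointW a p0 a m (foldedHeight J (psum w) n) =
      endpointW a p0 a (n + m) (2 * J) := by
  induction n generalizing m with
  | zero => simp [walkWeight, foldedHeight, changesFrom, psum_zero]
  | succ n ih =>
    have hstep (y : ℤ) : ∑ s, stepWeight a p0 a s * endpointW a p0 a m (y + stepVal s) =
        endpointW a p0 a (m + 1) y := by
      rw [sum_stepWeight_mul a p0 a fun v => endpointW a p0 a m (y + v), endpointW_succ, add_zero,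
        ← sub_eq_add_neg]
      ring
    rw [sum_walkWeight_mul_succ]
    simp only [sum_stepWeight_mul_foldedHeight_snoc (endpointW_neg a p0 a m), hstep]
    rw [ih, add_right_comm, add_assoc]

theorem sum_walkWeight_bridge_le_changesFrom (a p0 : ℝ) (J n : ℕ) :
    ∑ w : Fin n → Fin 3 with psum w n = 0 ∧ J ≤ changesFrom 1 (psum w) n, walkWeight a p0 a w =
      endpointW a p0 a n (2 * J) := by
  rw [← add_zero n, ← sum_walkWeight_mul_endpointW_foldedHeight, Finset.sum_filter]
  simp [endpointW_zero, foldedHeight_eq_zero_iff]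

lemma bridgeW_sub_sum_bridgeSignW (pm p0 p1 : ℝ) (n K : ℕ) :
    bridgeW pm p0 p1 n - ∑ k ∈ Finset.range K, bridgeSignW pm p0 p1 n k =
      ∑ w : Fin n → Fin 3 with psum w n = 0 ∧ K ≤ signChanges w, walkWeight pm p0 p1 w := by
  have hsplit (w : Fin n → Fin 3) :
      (∑ k ∈ Finset.range K,
          if psum w n = 0 ∧ signChanges w = k then walkWeight pm p0 p1 w else 0) =
        if psum w n = 0 ∧ signChanges w < K then walkWeight pm p0 p1 w else 0 := by
    simp [ite_and]
  simp only [bridgeW, bridgeSignW, Finset.sum_filter]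
  rw [Finset.sum_comm, ← Finset.sum_sub_distrib]
  refine Finset.sum_congr rfl fun w _ => ?_
  rw [hsplit]
  grind

lemma endpointW_le_bridgeW_sub (ha : 0 ≤ a) (hp0 : 0 ≤ p0) (n K : ℕ) :
    endpointW a p0 a n (2 * (K + 1 : ℕ)) ≤
      bridgeW a p0 a n - ∑ k ∈ Finset.range K, bridgeSignW a p0 a n k := by
  rw [bridgeW_sub_sum_bridgeSignW, ← sum_walkWeight_bridge_le_changesFrom]
  refine Finset.sum_le_sum_of_subset_of_nonneg
    (Finset.monotone_filter_right _ fun w _ ⟨hw, hK⟩ => ⟨hw, ?_⟩)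
    fun w _ _ => walkWeight_nonneg ha hp0 ha w
  rw [signChanges_eq_changesFrom]
  exact Nat.le_of_succ_le_succ (hK.trans (changesFrom_le_succ 1 _ n))

lemma bridgeW_sub_le_endpointW (ha : 0 ≤ a) (hp0 : 0 ≤ p0) (n K : ℕ) :
    bridgeW a p0 a n - ∑ k ∈ Finset.range K, bridgeSignW a p0 a n k ≤
      endpointW a p0 a n (2 * K) := by
  rw [bridgeW_sub_sum_bridgeSignW, ← sum_walkWeight_bridge_le_changesFrom]
  refine Finset.sum_le_sum_of_subset_of_nonneg
    (Finset.monotone_filter_right _ fun w _ ⟨hw, hK⟩ => ⟨hw, ?_⟩)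
    fun w _ _ => walkWeight_nonneg ha hp0 ha w
  rw [signChanges_eq_changesFrom] at hK
  exact hK.trans (changesFrom_zero_le 1 _ n)

end Reflection

section LocalLimit

open Filter Topology MeasureTheory Real

lemma intervalIntegral_comp_cos_intMul (y : ℤ) :
    ∫ θ in -π..π, cos (y * θ) = if y = 0 then 2 * π else 0 := by
  split_ifs with hy
  · simp [hy, two_mul]
  · have hy' : (y : ℝ) ≠ 0 := by exact_mod_cast hy
    rw [intervalIntegral.integral_comp_mul_left cos hy', integral_cos]
    simp

theorem endpointW_eq_integral (a p0 : ℝ) (n : ℕ) (y : ℤ) :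
    endpointW a p0 a n y =
      (2 * π)⁻¹ * ∫ θ in -π..π, (p0 + 2 * a * cos θ) ^ n * cos (y * θ) := by
  induction n generalizing y with
  | zero =>
    simp only [endpointW_zero, pow_zero, one_mul, intervalIntegral_comp_cos_intMul, mul_ite,
      mul_zero]
    rw [inv_mul_cancel₀ two_pi_pos.ne']
  | succ n ih =>
    have hint (c : ℝ) (z : ℤ) : IntervalIntegrable
        (fun θ => c * ((p0 + 2 * a * cos θ) ^ n * cos (z * θ))) volume (-π) π :=
      (by fun_prop : Continuous _).intervalIntegrable _ _
    have hcos (θ : ℝ) : (p0 + 2 * a * cos θ) ^ (n + 1) * cos (y * θ) =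
        a * ((p0 + 2 * a * cos θ) ^ n * cos ((y + 1 : ℤ) * θ)) +
          p0 * ((p0 + 2 * a * cos θ) ^ n * cos (y * θ)) +
          a * ((p0 + 2 * a * cos θ) ^ n * cos ((y - 1 : ℤ) * θ)) := by
      push_cast
      rw [add_mul (y : ℝ), sub_mul (y : ℝ), one_mul, cos_add, cos_sub]
      ring
    simp only [hcos]
    rw [intervalIntegral.integral_add ((hint _ _).add (hint _ _)) (hint _ _),
      intervalIntegral.integral_add (hint _ _) (hint _ _)]
    simp only [intervalIntegral.integral_const_mul]
    rw [endpointW_succ, ih, ih, ih]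
    ring

lemma tendsto_sqrt_natCast_atTop : Tendsto (fun n : ℕ => √(n : ℝ)) atTop atTop :=
  tendsto_sqrt_atTop.comp tendsto_natCast_atTop_atTop

lemma sqrt_mul_intervalIntegral_eq_integral_indicator (c : ℝ) (hc : 0 ≤ c) (g : ℝ → ℝ) {n : ℕ}
    (hn : n ≠ 0) :
    √n * ∫ θ in -c..c, g θ =
      ∫ θ, (Set.Ioc (-(c * √n)) (c * √n)).indicator (fun θ => g (θ / √n)) θ := by
  have hsqrt : √(n : ℝ) ≠ 0 := by positivity
  have hle : -(c * √n) ≤ c * √n := neg_le_self (by positivity)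
  rw [integral_indicator measurableSet_Ioc, ← intervalIntegral.integral_of_le hle,
    intervalIntegral.integral_comp_div g hsqrt, smul_eq_mul, neg_div, mul_div_cancel_right₀ c hsqrt]

lemma abs_pow_comp_div_sqrt_le {f : ℝ → ℝ} {c κ θ : ℝ}
    (hf : ∀ θ, |θ| ≤ c → |f θ| ≤ exp (-κ * θ ^ 2)) {n : ℕ} (hn : n ≠ 0) (hθ : |θ| ≤ c * √n) :
    |f (θ / √n)| ^ n ≤ exp (-κ * θ ^ 2) := by
  have hsqrt : 0 < √(n : ℝ) := by positivity
  have hθc : |θ / √n| ≤ c := by rwa [abs_div, abs_of_pos hsqrt, div_le_iff₀ hsqrt]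
  calc |f (θ / √n)| ^ n ≤ exp (-κ * (θ / √n) ^ 2) ^ n := by gcongr; exact hf _ hθc
    _ = exp (-κ * θ ^ 2) := by
      rw [← exp_nat_mul, div_pow, sq_sqrt n.cast_nonneg]
      field_simp

-- Laplace's method: after the substitution `θ ↦ θ / √n` the integrands are dominated by a Gaussian.
theorem tendsto_sqrt_mul_integral_pow_mul {f g : ℝ → ℝ} {b c κ t C : ℝ} {m : ℕ → ℝ}
    (hf : Measurable f) (hg : Continuous g) (hgC : ∀ x, |g x| ≤ C) (hc : 0 < c) (hκ : 0 < κ)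
    (hfκ : ∀ θ, |θ| ≤ c → |f θ| ≤ exp (-κ * θ ^ 2))
    (hfb : ∀ θ, Tendsto (fun n : ℕ => f (θ / √n) ^ n) atTop (𝓝 (exp (-b * θ ^ 2))))
    (hm : Tendsto (fun n => m n / √n) atTop (𝓝 t)) :
    Tendsto (fun n : ℕ => √n * ∫ θ in -c..c, f θ ^ n * g (m n * θ)) atTop
      (𝓝 (∫ θ, exp (-b * θ ^ 2) * g (t * θ))) := by
  set F : ℕ → ℝ → ℝ := fun n => (Set.Ioc (-(c * √n)) (c * √n)).indicator
    fun θ => f (θ / √n) ^ n * g (m n * (θ / √n)) with hF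
  have hC : 0 ≤ C := (abs_nonneg _).trans (hgC 0)
  have hmeas (n : ℕ) : AEStronglyMeasurable (F n) :=
    (Measurable.indicator (by fun_prop) measurableSet_Ioc).aestronglyMeasurable
  have hbound (n : ℕ) (θ : ℝ) : ‖F n θ‖ ≤ exp (-κ * θ ^ 2) * C := by
    by_cases hθ : θ ∈ Set.Ioc (-(c * √n)) (c * √n)
    · have hn : n ≠ 0 := by rintro rfl; simpa using hθ.1.trans_le hθ.2
      simp only [hF, Set.indicator_of_mem hθ, norm_mul, norm_pow, norm_eq_abs]
      gcongr
      exacts [abs_pow_comp_div_sqrt_le hfκ hn (abs_le.2 ⟨hθ.1.le, hθ.2⟩), hgC _]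
    · simp only [hF, Set.indicator_of_notMem hθ, norm_zero]
      positivity
  have hlim (θ : ℝ) : Tendsto (fun n => F n θ) atTop (𝓝 (exp (-b * θ ^ 2) * g (t * θ))) := by
    have hgm : Tendsto (fun n : ℕ => g (m n * (θ / √n))) atTop (𝓝 (g (t * θ))) :=
      (hg.tendsto _).comp ((hm.mul_const θ).congr fun n => by ring)
    refine ((hfb θ).mul hgm).congr' ?_
    filter_upwards [tendsto_sqrt_natCast_atTop.eventually_gt_atTop (|θ| / c)] with n hn
    rw [div_lt_iff₀' hc, abs_lt] at hn
    have hmem : θ ∈ Set.Ioc (-(c * √n)) (c * √n) := ⟨hn.1, hn.2.le⟩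
    simp only [hF, Set.indicator_of_mem hmem]
  refine (tendsto_integral_of_dominated_convergence _ hmeas
    ((integrable_exp_neg_mul_sq hκ).mul_const C) (fun n => .of_forall (hbound n))
    (.of_forall hlim)).congr' ?_
  filter_upwards [eventually_ne_atTop 0] with n hn
  exact (sqrt_mul_intervalIntegral_eq_integral_indicator c hc.le
    (fun θ => f θ ^ n * g (m n * θ)) hn).symm

lemma abs_one_sub_mul_one_sub_cos_le {q θ : ℝ} (hq0 : 0 < q) (hq1 : q < 1) (hθ : |θ| ≤ π) :
    |1 - q * (1 - cos θ)| ≤ exp (-(min q (1 - q) * (2 / π ^ 2)) * θ ^ 2) := by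
  set δ := min q (1 - q)
  have hδ : 0 < δ := lt_min hq0 (by linarith)
  have hδq : δ ≤ q := min_le_left _ _
  have hδq' : δ ≤ 1 - q := min_le_right _ _
  have hlow : 0 ≤ 1 - cos θ := sub_nonneg.2 (cos_le_one θ)
  have hup : 1 - cos θ ≤ 2 := by linarith [neg_one_le_cos θ]
  calc |1 - q * (1 - cos θ)| ≤ 1 - δ * (1 - cos θ) := abs_le.2 ⟨by nlinarith, by nlinarith⟩
    _ ≤ 1 - δ * (2 / π ^ 2 * θ ^ 2) := by
      gcongr
      linarith [cos_le_one_sub_mul_cos_sq hθ]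
    _ = -(δ * (2 / π ^ 2)) * θ ^ 2 + 1 := by ring
    _ ≤ _ := add_one_le_exp _

lemma one_sub_cos_eq_sinc (x : ℝ) : 1 - cos x = x ^ 2 / 2 * sinc (x / 2) ^ 2 := by
  have hcos : cos x = 1 - 2 * sin (x / 2) ^ 2 := by
    rw [← mul_div_cancel₀ x two_ne_zero, cos_two_mul, cos_sq', mul_div_cancel_left₀ _ two_ne_zero]
    ring
  rcases eq_or_ne x 0 with rfl | hx
  · simp
  · rw [hcos, sinc_of_ne_zero (by positivity)]
    field_simp
    ring

lemma tendsto_mul_one_sub_cos (θ : ℝ) :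
    Tendsto (fun n : ℕ => n * (1 - cos (θ / √n))) atTop (𝓝 (θ ^ 2 / 2)) := by
  have hsinc : Tendsto (fun n : ℕ => sinc (θ / √n / 2)) atTop (𝓝 1) := by
    have h := ((tendsto_sqrt_natCast_atTop.const_div_atTop θ).div_const 2)
    rw [zero_div] at h
    simpa [Function.comp_def] using (continuous_sinc.tendsto 0).comp h
  have h := (hsinc.pow 2).const_mul (θ ^ 2 / 2)
  rw [one_pow, mul_one] at h
  refine h.congr' ?_
  filter_upwards [eventually_ne_atTop 0] with n hn
  have hn' : (n : ℝ) ≠ 0 := by positivity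
  rw [one_sub_cos_eq_sinc, div_pow θ, sq_sqrt n.cast_nonneg]
  field_simp

lemma tendsto_one_sub_mul_one_sub_cos_pow (q θ : ℝ) :
    Tendsto (fun n : ℕ => (1 - q * (1 - cos (θ / √n))) ^ n) atTop
      (𝓝 (exp (-(q / 2) * θ ^ 2))) := by
  simp only [sub_eq_add_neg (1 : ℝ) (q * _)]
  refine tendsto_one_add_pow_exp_of_tendsto ?_
  have h := (tendsto_mul_one_sub_cos θ).const_mul (-q)
  rw [show -q * (θ ^ 2 / 2) = -(q / 2) * θ ^ 2 by ring] at h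
  exact h.congr fun n => by ring

lemma integral_gaussian_mul_cos {b : ℝ} (hb : 0 < b) (t : ℝ) :
    ∫ θ, exp (-b * θ ^ 2) * cos (t * θ) = √(π / b) * exp (-t ^ 2 / (4 * b)) := by
  have hb' : 0 < (b : ℂ).re := by simpa using hb
  have hre (θ : ℝ) : exp (-b * θ ^ 2) * cos (t * θ) =
      RCLike.re (Complex.exp (-b * θ ^ 2 + Complex.I * t * θ + 0)) := by
    rw [RCLike.re_eq_complex_re, Complex.exp_re]
    simp [← Complex.ofReal_pow]
  have hrhs : √(π / b) * exp (-t ^ 2 / (4 * b)) =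
      (((π : ℂ) / b) ^ (1 / 2 : ℂ) * Complex.exp (-t ^ 2 / (4 * b))).re := by
    rw [← Complex.ofReal_re (_ * _), sqrt_eq_rpow]
    push_cast [Complex.ofReal_cpow (div_pos pi_pos hb).le]
    rfl
  rw [hrhs, ← fourierIntegral_gaussian hb']
  simp only [hre]
  rw [integral_re (integrable_cexp_quadratic hb' _ _)]
  simp [add_comm, Complex.exp_add]

/-- The variance of one step of the walk with step weights `a`, `p0`, `a`, normalised to a
probability distribution. -/
noncomputable def stepVariance (a p0 : ℝ) : ℝ :=
  2 * a / (p0 + 2 * a)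

variable {a p0 t : ℝ} {m : ℕ → ℤ}

lemma stepVariance_pos (ha : 0 < a) (hp0 : 0 ≤ p0) : 0 < stepVariance a p0 :=
  div_pos (by positivity) (by positivity)

lemma stepVariance_lt_one (ha : 0 ≤ a) (hp0 : 0 < p0) : stepVariance a p0 < 1 :=
  (div_lt_one (by positivity)).2 (by linarith)

lemma endpointW_div_pow_eq_integral (h : p0 + 2 * a ≠ 0) (n : ℕ) (y : ℤ) :
    endpointW a p0 a n y / (p0 + 2 * a) ^ n = (2 * π)⁻¹ *
      ∫ θ in -π..π, (1 - stepVariance a p0 * (1 - cos θ)) ^ n * cos (y * θ) := by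
  have hfactor (θ : ℝ) : p0 + 2 * a * cos θ =
      (p0 + 2 * a) * (1 - stepVariance a p0 * (1 - cos θ)) := by
    unfold stepVariance
    field_simp
    ring
  rw [endpointW_eq_integral]
  simp only [hfactor, mul_pow, mul_assoc ((p0 + 2 * a) ^ n),
    intervalIntegral.integral_const_mul]
  field_simp

theorem tendsto_sqrt_mul_endpointW_div_pow (ha : 0 < a) (hp0 : 0 < p0)
    (hm : Tendsto (fun n : ℕ => m n / √n) atTop (𝓝 t)) :
    Tendsto (fun n : ℕ => √n * (endpointW a p0 a n (m n) / (p0 + 2 * a) ^ n)) atTop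
      (𝓝 (exp (-t ^ 2 / (2 * stepVariance a p0)) / √(2 * π * stepVariance a p0))) := by
  have hq0 := stepVariance_pos ha hp0.le
  have hq1 := stepVariance_lt_one ha.le hp0
  have hlaplace := tendsto_sqrt_mul_integral_pow_mul (by fun_prop) continuous_cos abs_cos_le_one
    pi_pos (mul_pos (lt_min hq0 (sub_pos.2 hq1)) (by positivity))
    (fun θ hθ => abs_one_sub_mul_one_sub_cos_le hq0 hq1 hθ)
    (tendsto_one_sub_mul_one_sub_cos_pow _) hm
  have hlim : (2 * π)⁻¹ * ∫ θ, exp (-(stepVariance a p0 / 2) * θ ^ 2) * cos (t * θ) =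
      exp (-t ^ 2 / (2 * stepVariance a p0)) / √(2 * π * stepVariance a p0) := by
    have hsqrt : π / (stepVariance a p0 / 2) = (2 * π) ^ 2 / (2 * π * stepVariance a p0) := by
      field_simp
    rw [integral_gaussian_mul_cos (half_pos hq0), hsqrt, sqrt_div (by positivity),
      sqrt_sq two_pi_pos.le, show 4 * (stepVariance a p0 / 2) = 2 * stepVariance a p0 by ring]
    field_simp
  rw [← hlim]
  refine (hlaplace.const_mul _).congr fun n => ?_
  rw [endpointW_div_pow_eq_integral (by positivity)]
  ring

lemma tendsto_endpointW_div_bridgeW (ha : 0 < a) (hp0 : 0 < p0)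
    (hm : Tendsto (fun n : ℕ => m n / √n) atTop (𝓝 t)) :
    Tendsto (fun n => endpointW a p0 a n (m n) / bridgeW a p0 a n) atTop
      (𝓝 (exp (-t ^ 2 / (2 * stepVariance a p0)))) := by
  have hq := stepVariance_pos ha hp0.le
  have hbridge := tendsto_sqrt_mul_endpointW_div_pow ha hp0 (m := fun _ => 0) (t := 0) (by simp)
  rw [zero_pow two_ne_zero, neg_zero, zero_div, exp_zero] at hbridge
  have hratio := (tendsto_sqrt_mul_endpointW_div_pow ha hp0 hm).div hbridge (by positivity)
  rw [div_div_div_cancel_right₀ (by positivity), div_one] at hratio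
  refine hratio.congr' ?_
  filter_upwards [eventually_ne_atTop 0] with n hn
  have hsqrt : √(n : ℝ) ≠ 0 := by positivity
  rw [Pi.div_apply, mul_div_mul_left _ _ hsqrt, div_div_div_cancel_right₀ (by positivity)]
  rfl

end LocalLimit

section SymmetricLimit

open Filter Topology Real

variable {a p0 x : ℝ}

lemma tendsto_two_mul_floor_mul_sqrt_add_div (hx : 0 ≤ x) (c : ℕ) :
    Tendsto (fun n : ℕ => ((2 * (⌊x * √n⌋₊ + c : ℕ) : ℤ) : ℝ) / √n) atTop (𝓝 (2 * x)) := by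
  have hfloor := (tendsto_nat_floor_mul_div_atTop hx).comp tendsto_sqrt_natCast_atTop
  have hconst := tendsto_sqrt_natCast_atTop.const_div_atTop (c : ℝ)
  have h := (hfloor.add hconst).const_mul 2
  rw [add_zero] at h
  refine h.congr fun n => ?_
  push_cast [Function.comp_apply]
  ring

theorem tendsto_sum_bridgeSignW_div_bridgeW (ha : 0 < a) (hp0 : 0 < p0) (hx : 0 ≤ x) :
    Tendsto
      (fun n : ℕ =>
        (∑ k ∈ Finset.range (⌊x * √n⌋₊ + 1), bridgeSignW a p0 a n k) / bridgeW a p0 a n)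
      atTop (𝓝 (1 - exp (-(2 * x) ^ 2 / (2 * stepVariance a p0)))) := by
  have htail (c : ℕ) := (tendsto_endpointW_div_bridgeW ha hp0
    (tendsto_two_mul_floor_mul_sqrt_add_div hx c)).const_sub 1
  have hb (n : ℕ) : 0 < bridgeW a p0 a n := bridgeW_pos ha.le hp0 ha.le n
  refine tendsto_of_tendsto_of_tendsto_of_le_of_le (htail 1) (htail 2) (fun n => ?_) fun n => ?_
  · rw [one_sub_div (hb n).ne']
    gcongr
    · exact (hb n).le
    · exact sub_le_comm.1 (bridgeW_sub_le_endpointW ha.le hp0.le n _)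
  · rw [one_sub_div (hb n).ne']
    gcongr
    · exact (hb n).le
    · exact le_sub_comm.1 (endpointW_le_bridgeW_sub ha.le hp0.le n _)

end SymmetricLimit

section Tilt

open Real

variable {pm p0 p1 τ : ℝ}

lemma div_sqrt_div_eq_sqrt_mul (hpm : 0 ≤ pm) (p1 : ℝ) :
    pm / √(pm / p1) = √(pm * p1) := by
  rw [sqrt_div hpm, sqrt_mul hpm, div_div_eq_mul_div, mul_div_right_comm, div_sqrt]

lemma mul_sqrt_div_eq_sqrt_mul (pm : ℝ) (hp1 : 0 ≤ p1) :
    p1 * √(pm / p1) = √(pm * p1) := by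
  rw [sqrt_div' _ hp1, sqrt_mul' _ hp1, mul_div_left_comm, div_sqrt]

lemma four_mul_sq_eq_stepVariance (hpm : 0 ≤ pm) (hp0 : 0 ≤ p0) (hτ : 0 < τ) :
    4 * (τ / 2 * √(2 * pm / τ ^ 3 / (p0 + 2 * (pm / τ)))) ^ 2 = stepVariance (pm / τ) p0 := by
  rw [mul_pow, sq_sqrt (by positivity), stepVariance]
  field_simp
  norm_num

end Tilt

/-- **Limit law for sign changes of Motzkin bridges**: `X_n/√n` converges in
distribution to the Rayleigh law `R(σ)` with `σ = (τ/2)√(P″(τ)/P(τ))`. -/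
theorem bridges_sign_changes_rayleigh (pm p0 p1 : ℝ)
    (hpm : 0 < pm) (hp0 : 0 < p0) (hp1 : 0 < p1) :
    let τ : ℝ := Real.sqrt (pm / p1)
    let Pτ : ℝ := p0 + 2 * Real.sqrt (pm * p1)
    let P''τ : ℝ := 2 * pm / τ ^ 3
    let σ : ℝ := (τ / 2) * Real.sqrt (P''τ / Pτ)
    ∀ x : ℝ, 0 ≤ x →
      Filter.Tendsto
        (fun n : ℕ =>
          (∑ k ∈ Finset.range (⌊x * Real.sqrt n⌋₊ + 1), bridgeSignW pm p0 p1 n k) /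
            bridgeW pm p0 p1 n)
        Filter.atTop
        (nhds (1 - Real.exp (-x ^ 2 / (2 * σ ^ 2)))) := by
  intro τ Pτ P''τ σ x hx
  have hτ : 0 < τ := Real.sqrt_pos.2 (div_pos hpm hp1)
  have hdiv : pm / τ = √(pm * p1) := div_sqrt_div_eq_sqrt_mul hpm.le p1
  have hmul : p1 * τ = √(pm * p1) := mul_sqrt_div_eq_sqrt_mul pm hp1.le
  have hσ : 4 * σ ^ 2 = stepVariance √(pm * p1) p0 := by
    have h := four_mul_sq_eq_stepVariance hpm.le hp0.le hτ
    rwa [hdiv] at h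
  have hexp : -x ^ 2 / (2 * σ ^ 2) = -(2 * x) ^ 2 / (2 * stepVariance √(pm * p1) p0) := by
    rw [← hσ]
    ring
  simp only [← bridgeW_tilt pm p0 p1 hτ.ne', ← bridgeSignW_tilt pm p0 p1 hτ.ne', hdiv, hmul, hexp]
  exact tendsto_sum_bridgeSignW_div_bridgeW (Real.sqrt_pos.2 (mul_pos hpm hp1)) hp0 hx
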